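/- Let n ≥ 7 with n ≠ 10, and let A be an n×n 0-1 matrix with finite stable index. Then θ(A) = g(n) if and only if A is permutation similar to a block matrix of the form [[C_p, X],[0, C_q]], where X is a p×q 0-1 matrix with exactly one nonzero entry and (p,q) satisfies condition (★) for n (in either order). -/

import Mathlib

/-- A matrix over ℕ is a 0-1 matrix iff all its entries are at most 1. -/
def IsZO {α β : Type*} (A : Matrix α β ℕ) : Prop := ∀ i j, A i j ≤ 1

/-- The stable index of a 0-1 matrix: the smallest positive `k` with `A ^ (k+1)`
not a 0-1 matrix, or `⊤` if no such `k` exists. -/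
noncomputable def theta {α : Type*} [Fintype α] [DecidableEq α]
    (A : Matrix α α ℕ) : ℕ∞ :=
  sInf ((fun k : ℕ => (k : ℕ∞)) '' {k : ℕ | 1 ≤ k ∧ ¬ IsZO (A ^ (k + 1))})

/-- `g(n)` from the paper. -/
def g (n : ℕ) : ℕ :=
  if n % 2 = 1 then (n ^ 2 - 1) / 4
  else if n % 4 = 0 then (n ^ 2 - 4) / 4
  else (n ^ 2 - 16) / 4

/-- Basic circulant 0-1 matrix of order `n`. -/
def Cmat (n : ℕ) : Matrix (Fin n) (Fin n) ℕ :=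
  Matrix.of fun i j => if (j : ℕ) = ((i : ℕ) + 1) % n then 1 else 0

/-- Condition (★) on `(n, p, q)`. -/
def StarCond (n p q : ℕ) : Prop :=
  p + q = n ∧
  ((n % 2 = 1 ∧ ({p, q} : Finset ℕ) = {(n + 1) / 2, (n - 1) / 2}) ∨
   (n % 4 = 0 ∧ ({p, q} : Finset ℕ) = {(n + 2) / 2, (n - 2) / 2}) ∨
   (n % 4 = 2 ∧ ({p, q} : Finset ℕ) = {(n + 4) / 2, (n - 4) / 2}))

open Function

section Digraph

variable {V : Type*}

/-- `Walk E k x y`: there is a walk with `k` steps from `x` to `y` in the digraph `E`. -/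
def Walk (E : V → V → Prop) : ℕ → V → V → Prop
  | 0, x, y => x = y
  | k + 1, x, y => ∃ z, E x z ∧ Walk E k z y

/-- `y` can be reached from `x` by a walk of some length. -/
def Reach (E : V → V → Prop) (x y : V) : Prop := ∃ k, Walk E k x y

/-- Two walks with `j + 1` steps and common endpoints that separate at the first step. -/
def Fork (E : V → V → Prop) (j : ℕ) : Prop :=
  ∃ x y z w, y ≠ z ∧ E x y ∧ E x z ∧ Walk E j y w ∧ Walk E j z w

/-- `x` lies on a closed walk of positive length. -/
def Recurrent (E : V → V → Prop) (x : V) : Prop := ∃ y, E x y ∧ Reach E y x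

/-- Every vertex has at most one out-neighbour from which it can be reached again. -/
def ReturnUnique (E : V → V → Prop) : Prop :=
  ∀ x y z, E x y → E x z → Reach E y x → Reach E z x → y = z

open Classical in
/-- A successor of `x` from which `x` can be reached, if there is one. -/
noncomputable def nextOnCycle (E : V → V → Prop) (x : V) : V :=
  if h : ∃ y, E x y ∧ Reach E y x then h.choose else x

variable {E : V → V → Prop}

theorem Walk.single {x y : V} (h : E x y) : Walk E 1 x y := ⟨y, h, rfl⟩

theorem Walk.append {i j : ℕ} {x y z : V} (h : Walk E i x y) (h' : Walk E j y z) :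
    Walk E (i + j) x z := by
  induction i generalizing x with
  | zero => cases h; simpa using h'
  | succ i ih =>
    obtain ⟨u, hu, hw⟩ := h
    rw [Nat.succ_add]
    exact ⟨u, hu, ih hw⟩

theorem Walk.of_steps {f : ℕ → V} {k : ℕ} (hf : ∀ t < k, E (f t) (f (t + 1))) (d : ℕ) :
    ∀ i, i + d ≤ k → Walk E d (f i) (f (i + d)) := by
  induction d with
  | zero => intro i _; rfl
  | succ d ih =>
    intro i hi
    refine ⟨f (i + 1), hf i (by omega), ?_⟩
    have := ih (i + 1) (by omega)
    rwa [show i + 1 + d = i + (d + 1) by omega] at this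

theorem Walk.exists_steps {k : ℕ} {x y : V} (h : Walk E k x y) :
    ∃ f : ℕ → V, f 0 = x ∧ f k = y ∧ ∀ t < k, E (f t) (f (t + 1)) := by
  induction k generalizing x with
  | zero => exact ⟨fun _ => x, rfl, h, by simp⟩
  | succ k ih =>
    obtain ⟨u, hu, hw⟩ := h
    obtain ⟨f, h0, hk, hs⟩ := ih hw
    refine ⟨fun t => Nat.casesOn t x f, rfl, hk, fun t ht => ?_⟩
    cases t with
    | zero => simpa [h0] using hu
    | succ t => exact hs t (by omega)

theorem Walk.exists_steps_through {i j : ℕ} {x c y : V} (h : Walk E i x c) (h' : Walk E j c y) :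
    ∃ f : ℕ → V, f 0 = x ∧ f i = c ∧ f (i + j) = y ∧ ∀ t < i + j, E (f t) (f (t + 1)) := by
  obtain ⟨f₁, h0, hk, hs⟩ := h.exists_steps
  obtain ⟨f₂, h0', hk', hs'⟩ := h'.exists_steps
  refine ⟨fun t => if t ≤ i then f₁ t else f₂ (t - i), by simpa using h0, by simpa using hk,
    ?_, fun t ht => ?_⟩
  · rcases Nat.eq_zero_or_pos j with rfl | hj
    · simp [hk, ← hk', h0']
    · simp [show ¬ i + j ≤ i by omega, hk']
  · rcases lt_trichotomy t i with hti | rfl | hti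
    · simpa [hti.le, Nat.succ_le_of_lt hti] using hs t hti
    · have := hs' 0 (by omega)
      simpa [hk, ← h0'] using this
    · have := hs' (t - i) (by omega)
      rw [show t - i + 1 = t + 1 - i by omega] at this
      simpa [show ¬ t ≤ i by omega, show ¬ t + 1 ≤ i by omega] using this

theorem Reach.refl (x : V) : Reach E x x := ⟨0, rfl⟩

theorem Reach.trans {x y z : V} (h : Reach E x y) (h' : Reach E y z) : Reach E x z :=
  let ⟨_, hi⟩ := h
  let ⟨_, hj⟩ := h'
  ⟨_, hi.append hj⟩

theorem Walk.reach {k : ℕ} {x y : V} (h : Walk E k x y) : Reach E x y := ⟨k, h⟩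

theorem Recurrent.of_walk {k : ℕ} {x : V} (hk : 0 < k) (h : Walk E k x x) : Recurrent E x := by
  obtain ⟨k, rfl⟩ := Nat.exists_eq_succ_of_ne_zero hk.ne'
  obtain ⟨y, hy, hw⟩ := h
  exact ⟨y, hy, hw.reach⟩

theorem ReturnUnique.next_eq (hu : ReturnUnique E) {x y : V} (h : E x y) (hr : Reach E y x) :
    nextOnCycle E x = y := by
  have hx : ∃ y, E x y ∧ Reach E y x := ⟨y, h, hr⟩
  rw [nextOnCycle, dif_pos hx]
  exact hu x _ _ hx.choose_spec.1 h hx.choose_spec.2 hr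

theorem Recurrent.edge_next {x : V} (h : Recurrent E x) : E x (nextOnCycle E x) := by
  have hx : ∃ y, E x y ∧ Reach E y x := h
  rw [nextOnCycle, dif_pos hx]
  exact hx.choose_spec.1

theorem Recurrent.next_reach {x : V} (h : Recurrent E x) : Reach E (nextOnCycle E x) x := by
  have hx : ∃ y, E x y ∧ Reach E y x := h
  rw [nextOnCycle, dif_pos hx]
  exact hx.choose_spec.2

theorem Recurrent.of_mutual {x y : V} (h : Recurrent E x) (hxy : Reach E x y)
    (hyx : Reach E y x) : Recurrent E y := by
  obtain ⟨z, hz, hzx⟩ := h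
  obtain ⟨i, hi⟩ := hyx
  obtain ⟨j, hj⟩ := hzx.trans hxy
  exact Recurrent.of_walk (by omega) (hi.append ((Walk.single hz).append hj))

theorem Recurrent.next {x : V} (h : Recurrent E x) : Recurrent E (nextOnCycle E x) :=
  h.of_mutual (Walk.single h.edge_next).reach h.next_reach

theorem Recurrent.walk_iterate {x : V} (h : Recurrent E x) (k : ℕ) :
    Walk E k x ((nextOnCycle E)^[k] x) := by
  induction k generalizing x with
  | zero => rfl
  | succ k ih => exact ⟨_, h.edge_next, ih h.next⟩

theorem Recurrent.iterate {x : V} (h : Recurrent E x) (k : ℕ) :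
    Recurrent E ((nextOnCycle E)^[k] x) := by
  induction k generalizing x with
  | zero => exact h
  | succ k ih => exact ih h.next

theorem Recurrent.iterate_reach {x : V} (h : Recurrent E x) (k : ℕ) :
    Reach E ((nextOnCycle E)^[k] x) x := by
  induction k generalizing x with
  | zero => exact Reach.refl x
  | succ k ih => exact (ih h.next).trans h.next_reach

theorem ReturnUnique.eq_iterate (hu : ReturnUnique E) {k : ℕ} {x y : V} (h : Walk E k x y)
    (hr : Reach E y x) : (nextOnCycle E)^[k] x = y := by
  induction k generalizing x with
  | zero => exact h
  | succ k ih =>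
    obtain ⟨z, hz, hw⟩ := h
    rw [iterate_succ_apply, hu.next_eq hz (hw.reach.trans hr)]
    exact ih hw (hr.trans (Walk.single hz).reach)

theorem ReturnUnique.mem_periodicPts (hu : ReturnUnique E) {x : V} (h : Recurrent E x) :
    x ∈ periodicPts (nextOnCycle E) := by
  obtain ⟨y, hy, k, hk⟩ := h
  exact ⟨k + 1, by omega, hu.eq_iterate (k := k + 1) ⟨y, hy, hk⟩ (Reach.refl x)⟩

theorem ReturnUnique.minimalPeriod_pos (hu : ReturnUnique E) {x : V} (h : Recurrent E x) :
    0 < minimalPeriod (nextOnCycle E) x :=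
  minimalPeriod_pos_of_mem_periodicPts (hu.mem_periodicPts h)

theorem ReturnUnique.minimalPeriod_eq (hu : ReturnUnique E) {x y : V} (h : Recurrent E x)
    (hxy : Reach E x y) (hyx : Reach E y x) :
    minimalPeriod (nextOnCycle E) y = minimalPeriod (nextOnCycle E) x := by
  obtain ⟨k, hk⟩ := hxy
  rw [← hu.eq_iterate hk hyx]
  exact minimalPeriod_apply_iterate (hu.mem_periodicPts h) k

theorem Recurrent.walk_of_dvd {x : V} (h : Recurrent E x) {k : ℕ}
    (hk : minimalPeriod (nextOnCycle E) x ∣ k) : Walk E k x x := by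
  have := h.walk_iterate k
  rwa [(isPeriodicPt_iff_minimalPeriod_dvd.mpr hk).eq] at this

theorem ReturnUnique.dvd_of_walk (hu : ReturnUnique E) {x : V} {k : ℕ} (h : Walk E k x x) :
    minimalPeriod (nextOnCycle E) x ∣ k :=
  isPeriodicPt_iff_minimalPeriod_dvd.mp (hu.eq_iterate h (Reach.refl x))

/-- A walk with a repeated vertex can be shortened by one turn around the cycle there. -/
theorem ReturnUnique.shorten (hu : ReturnUnique E) {f : ℕ → V} {k s t : ℕ}
    (hf : ∀ r < k, E (f r) (f (r + 1))) (hst : s < t) (htk : t ≤ k) (h : f s = f t) :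
    Recurrent E (f s) ∧ ∃ i j, Walk E i (f 0) (f s) ∧ Walk E j (f s) (f k) ∧
      i + j + minimalPeriod (nextOnCycle E) (f s) = k := by
  have hloop : Walk E (t - s) (f s) (f s) := by
    have := Walk.of_steps hf (t - s) s (by omega)
    rwa [show s + (t - s) = t by omega, ← h] at this
  have hrec : Recurrent E (f s) := Recurrent.of_walk (by omega) hloop
  have hdvd := hu.dvd_of_walk hloop
  have hle := Nat.le_of_dvd (by omega) hdvd
  have hpre : Walk E s (f 0) (f s) := by simpa using Walk.of_steps hf s 0 (by omega)
  have hpost : Walk E (k - t) (f s) (f k) := by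
    have := Walk.of_steps hf (k - t) t (by omega)
    rwa [show t + (k - t) = k by omega, ← h] at this
  refine ⟨hrec, s, (t - s - minimalPeriod (nextOnCycle E) (f s)) + (k - t), hpre,
    (hrec.walk_of_dvd (Nat.dvd_sub hdvd dvd_rfl)).append hpost, by omega⟩

theorem exists_repeat {f : ℕ → V} {k : ℕ} (s : Finset V) (hs : s.card ≤ k)
    (hf : ∀ t ≤ k, f t ∈ s) : ∃ i j, i < j ∧ j ≤ k ∧ f i = f j := by
  obtain ⟨i, hi, j, hj, hij, heq⟩ := Finset.exists_ne_map_eq_of_card_lt_of_maps_to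
    (s := Finset.range (k + 1)) (t := s) (f := f) (by simpa using Nat.lt_succ_of_le hs)
    (fun t ht => hf t (by simpa [Nat.lt_succ_iff] using ht))
  simp only [Finset.mem_range] at hi hj
  rcases lt_or_gt_of_ne hij with h | h
  · exact ⟨i, j, h, by omega, heq⟩
  · exact ⟨j, i, h, by omega, heq.symm⟩

section Finite

variable [Fintype V]

open Classical in
/-- The vertices of the strong component of `x`. -/
noncomputable def component (E : V → V → Prop) (x : V) : Finset V :=
  Finset.univ.filter fun y => Reach E x y ∧ Reach E y x

theorem mem_component {x y : V} : y ∈ component E x ↔ Reach E x y ∧ Reach E y x := by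
  simp [component]

theorem Recurrent.minimalPeriod_le_card {x : V} (h : Recurrent E x) :
    minimalPeriod (nextOnCycle E) x ≤ (component E x).card := by
  have := Finset.card_le_card_of_injOn (s := Finset.range (minimalPeriod (nextOnCycle E) x))
    (t := component E x) (fun k => (nextOnCycle E)^[k] x)
    (fun k _ => mem_component.mpr ⟨(h.walk_iterate k).reach, h.iterate_reach k⟩)
    (by simpa [Set.InjOn] using iterate_injOn_Iio_minimalPeriod (f := nextOnCycle E) (x := x))
  simpa using this

/-- Two ways of returning to a vertex produce a fork of length at most the number of vertices. -/
theorem returnUnique_of_not_fork (h : ∀ j ≤ Fintype.card V, ¬ Fork E j) : ReturnUnique E := by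
  classical
  intro x y z hxy hxz hyx hzx
  by_contra hne
  set b := Nat.find hyx with hb
  obtain ⟨f, hf0, hfb, hfs⟩ := (Nat.find_spec hyx).exists_steps
  have hyC (i : ℕ) (hi : i ≤ b) : Walk E i y (f i) := by
    simpa [hf0] using Walk.of_steps hfs i 0 (by omega)
  have hCx (i : ℕ) (hi : i ≤ b) : Walk E (b - i) (f i) x := by
    have := Walk.of_steps hfs (b - i) i (by omega)
    rwa [show i + (b - i) = b by omega, hfb] at this
  have hinj : ∀ i ≤ b, ∀ j ≤ b, i < j → f i ≠ f j := by
    intro i hi j hj hij heq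
    have hw := hyC i hi
    rw [heq] at hw
    exact Nat.find_min hyx (m := i + (b - j)) (by omega) (hw.append (hCx j hj))
  have hzC : ∃ l, ∃ i ≤ b, Walk E l z (f i) := by
    obtain ⟨l, hl⟩ := hzx
    exact ⟨l, b, le_rfl, by rwa [hfb]⟩
  set l := Nat.find hzC with hl
  obtain ⟨d, hd, hzd⟩ := Nat.find_spec hzC
  obtain ⟨u, hu0, hul, hus⟩ := hzd.exists_steps
  have hzu (i : ℕ) (hi : i ≤ l) : Walk E i z (u i) := by
    simpa [hu0] using Walk.of_steps hus i 0 (by omega)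
  have hud (i : ℕ) (hi : i ≤ l) : Walk E (l - i) (u i) (f d) := by
    have := Walk.of_steps hus (l - i) i (by omega)
    rwa [show i + (l - i) = l by omega, hul] at this
  have huf : ∀ i < l, ∀ j ≤ b, u i ≠ f j := by
    intro i hi j hj heq
    exact Nat.find_min hzC hi ⟨j, hj, heq ▸ hzu i hi.le⟩
  have huinj : ∀ i < l, ∀ j < l, i < j → u i ≠ u j := by
    intro i hi j hj hij heq
    have hw := hzu i hi.le
    rw [heq] at hw
    exact Nat.find_min hzC (m := i + (l - j)) (by omega) ⟨d, hd, hw.append (hud j hj.le)⟩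
  have hcard : (b + 1) + l ≤ Fintype.card V := by
    have : Function.Injective
        (Sum.elim (fun i : Fin (b + 1) => f i) (fun i : Fin l => u i)) := by
      refine Function.Injective.sumElim ?_ ?_ ?_
      · intro i j hij
        by_contra hne
        rcases lt_or_gt_of_ne (fun h => hne (Fin.ext h)) with h | h
        · exact hinj i (by omega) j (by omega) h hij
        · exact hinj j (by omega) i (by omega) h hij.symm
      · intro i j hij
        by_contra hne
        rcases lt_or_gt_of_ne (fun h => hne (Fin.ext h)) with h | h
        · exact huinj i (by omega) j (by omega) h hij
        · exact huinj j (by omega) i (by omega) h hij.symm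
      · intro i j hij
        exact huf j (by omega) i (by omega) hij.symm
    simpa using Fintype.card_le_of_injective _ this
  refine h _ hcard ⟨x, y, z, f d, hne, hxy, hxz, ?_, ?_⟩
  · have := ((hCx 0 (by omega)).append (Walk.single hxz)).append (hzu l le_rfl)
    rwa [hf0, hul] at this
  · have := (hzd.append (hCx d hd)).append ((Walk.single hxy).append (hyC d hd))
    rwa [show Nat.find hzC + (b - d) + (1 + d) = b + 1 + l by omega] at this

/-- A walk through a cycle that is comparable with no other cycle can be shortened by the length
of that cycle as long as it has enough steps. -/
theorem ReturnUnique.shorten_through (hu : ReturnUnique E)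
    (hsep : ∀ a b, Recurrent E a → Recurrent E b → Reach E a b → Reach E b a)
    {y w c c' : V} (hc : Recurrent E c) (hc' : Recurrent E c') (hcc' : ¬ Reach E c c') (m : ℕ) :
    ∀ k, (∃ i j v, Walk E i y v ∧ Walk E j v w ∧ Reach E c v ∧ Reach E v c ∧ i + j = k) →
      Fintype.card V + m * minimalPeriod (nextOnCycle E) c ≤
        k + minimalPeriod (nextOnCycle E) c + minimalPeriod (nextOnCycle E) c' →
      ∃ k', Walk E k' y w ∧ k' + m * minimalPeriod (nextOnCycle E) c = k := by
  classical
  induction m with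
  | zero =>
    rintro k ⟨i, j, v, hi, hj, -, -, rfl⟩ -
    exact ⟨i + j, hi.append hj, by simp⟩
  | succ m ih =>
    rintro k ⟨i, j, v, hi, hj, hcv, hvc, rfl⟩ hk
    have hv : Recurrent E v := hc.of_mutual hcv hvc
    obtain ⟨f, hf0, hfi, hfk, hfs⟩ := hi.exists_steps_through hj
    have hcomp (t : ℕ) (ht : t ≤ i + j) : Reach E v (f t) ∨ Reach E (f t) v := by
      rcases le_total t i with h | h
      · right
        have := Walk.of_steps hfs (i - t) t (by omega)
        rw [show t + (i - t) = i by omega, hfi] at this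
        exact this.reach
      · left
        have := Walk.of_steps hfs (t - i) i (by omega)
        rw [show i + (t - i) = t by omega, hfi] at this
        exact this.reach
    have hmutual (t : ℕ) (ht : t ≤ i + j) (hr : Recurrent E (f t)) :
        Reach E c (f t) ∧ Reach E (f t) c := by
      rcases hcomp t ht with h | h
      · exact ⟨hcv.trans h, (hsep _ _ hv hr h).trans hvc⟩
      · exact ⟨hcv.trans (hsep _ _ hr hv h), h.trans hvc⟩
    have hle : minimalPeriod (nextOnCycle E) c' ≤ _ := hc'.minimalPeriod_le_card
    have hcc := Finset.card_add_card_compl (component E c')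
    rw [Nat.succ_mul] at hk
    obtain ⟨s, t, hst, ht, heq⟩ := exists_repeat (f := f) (k := i + j) (component E c')ᶜ
      (by omega) (by
        intro t ht
        rw [Finset.mem_compl, mem_component]
        rintro ⟨h1, h2⟩
        exact hcc' ((hmutual t ht (hc'.of_mutual h1 h2)).1.trans h2))
    obtain ⟨hr, i', j', hi', hj', hsum⟩ := hu.shorten hfs hst ht heq
    obtain ⟨h1, h2⟩ := hmutual s (by omega) hr
    have hper := hu.minimalPeriod_eq hc h1 h2
    rw [hf0] at hi'
    rw [hfk] at hj'
    obtain ⟨k', hk', hsum'⟩ := ih (i' + j') ⟨i', j', f s, hi', hj', h1, h2, rfl⟩ (by omega)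
    exact ⟨k', hk', by rw [Nat.succ_mul]; omega⟩

/-- Two cycles joined by a shortest walk produce a fork. -/
theorem ReturnUnique.exists_fork_of_reach (hu : ReturnUnique E)
    (h : ∃ a b, Recurrent E a ∧ Recurrent E b ∧ Reach E a b ∧ ¬ Reach E b a) :
    ∃ a b l, Recurrent E a ∧ Recurrent E b ∧ Walk E (l + 1) a b ∧ ¬ Reach E b a ∧
      minimalPeriod (nextOnCycle E) a + minimalPeriod (nextOnCycle E) b + l ≤ Fintype.card V ∧
      Fork E (Nat.lcm (minimalPeriod (nextOnCycle E) a) (minimalPeriod (nextOnCycle E) b) + l) := by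
  classical
  have h' : ∃ l, ∃ a b, Recurrent E a ∧ Recurrent E b ∧ Walk E l a b ∧ ¬ Reach E b a := by
    obtain ⟨a, b, ha, hb, ⟨l, hl⟩, hba⟩ := h
    exact ⟨l, a, b, ha, hb, hl, hba⟩
  obtain ⟨a, b, ha, hb, hw, hba⟩ := Nat.find_spec h'
  have hmin := fun m => Nat.find_min h' (m := m)
  generalize Nat.find h' = m at hw hmin
  cases m with
  | zero => exact absurd (Reach.refl b) (by cases hw; exact hba)
  | succ l =>
  refine ⟨a, b, l, ha, hb, hw, hba, ?_, ?_⟩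
  · obtain ⟨f, hf0, hfl, hfs⟩ := hw.exists_steps
    have hpre (t : ℕ) (ht : t ≤ l + 1) : Walk E t a (f t) := by
      simpa [hf0] using Walk.of_steps hfs t 0 (by omega)
    have hpost (t : ℕ) (ht : t ≤ l + 1) : Walk E (l + 1 - t) (f t) b := by
      have := Walk.of_steps hfs (l + 1 - t) t (by omega)
      rwa [show t + (l + 1 - t) = l + 1 by omega, hfl] at this
    have hnot (t : ℕ) (ht0 : 0 < t) (htl : t < l + 1) : ¬ Recurrent E (f t) := by
      intro hr
      by_cases hta : Reach E (f t) a
      · exact hmin (l + 1 - t) (by omega) ⟨f t, b, hr, hb, hpost t htl.le,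
          fun hbt => hba (hbt.trans hta)⟩
      · exact hmin t htl ⟨a, f t, ha, hr, hpre t htl.le, hta⟩
    have hinj : Set.InjOn (fun t => f (t + 1)) (Finset.range l : Set ℕ) := by
      have key : ∀ s t, s < t → t < l → f (s + 1) ≠ f (t + 1) := by
        intro s t hst htl heq
        refine hnot (s + 1) (by omega) (by omega) (Recurrent.of_walk (k := t - s) (by omega) ?_)
        have := Walk.of_steps hfs (t - s) (s + 1) (by omega)
        rwa [show s + 1 + (t - s) = t + 1 by omega, ← heq] at this
      intro s hs t ht heq
      simp only [Finset.coe_range, Set.mem_Iio] at hs ht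
      by_contra hne
      rcases lt_or_gt_of_ne hne with h | h
      · exact key s t h ht heq
      · exact key t s h hs heq.symm
    have hdab : Disjoint (component E a) (component E b) := by
      rw [Finset.disjoint_left]
      intro v hva hvb
      rw [mem_component] at hva hvb
      exact hba (hvb.1.trans hva.2)
    have hdl : Disjoint (component E a ∪ component E b)
        ((Finset.range l).image fun t => f (t + 1)) := by
      rw [Finset.disjoint_left]
      intro v hv hvl
      obtain ⟨t, ht, rfl⟩ := Finset.mem_image.mp hvl
      rw [Finset.mem_range] at ht
      refine hnot (t + 1) (by omega) (by omega) ?_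
      rw [Finset.mem_union, mem_component, mem_component] at hv
      rcases hv with hv | hv
      · exact ha.of_mutual hv.1 hv.2
      · exact hb.of_mutual hv.1 hv.2
    have hcard := Finset.card_le_univ
      ((component E a ∪ component E b) ∪ ((Finset.range l).image fun t => f (t + 1)))
    rw [Finset.card_union_of_disjoint hdl, Finset.card_union_of_disjoint hdab,
      Finset.card_image_of_injOn hinj, Finset.card_range] at hcard
    have := ha.minimalPeriod_le_card
    have := hb.minimalPeriod_le_card
    omega
  · obtain ⟨v, hav, hvb⟩ := hw
    have hlcm : 0 < Nat.lcm (minimalPeriod (nextOnCycle E) a) (minimalPeriod (nextOnCycle E) b) :=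
      Nat.lcm_pos (hu.minimalPeriod_pos ha) (hu.minimalPeriod_pos hb)
    have hda := Nat.dvd_lcm_left (minimalPeriod (nextOnCycle E) a)
      (minimalPeriod (nextOnCycle E) b)
    have hdb := Nat.dvd_lcm_right (minimalPeriod (nextOnCycle E) a)
      (minimalPeriod (nextOnCycle E) b)
    generalize Nat.lcm (minimalPeriod (nextOnCycle E) a) (minimalPeriod (nextOnCycle E) b) = M
      at hlcm hda hdb
    obtain ⟨M, rfl⟩ := Nat.exists_eq_succ_of_ne_zero hlcm.ne'
    refine ⟨a, nextOnCycle E a, v, b, ?_, ha.edge_next, hav, ?_, ?_⟩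
    · intro heq
      exact hmin l (by omega) ⟨v, b, heq ▸ ha.next, hb, hvb,
        fun hbv => hba (hbv.trans (heq ▸ ha.next_reach))⟩
    · have h1 : Walk E M (nextOnCycle E a) a := by
        have := ha.next.walk_iterate M
        rwa [← iterate_succ_apply, (isPeriodicPt_iff_minimalPeriod_dvd.mpr hda).eq] at this
      have := h1.append ((Walk.single hav).append hvb)
      rwa [show M + (1 + l) = M.succ + l by omega] at this
    · have := hvb.append (hb.walk_of_dvd hdb)
      rwa [add_comm] at this

/-- If no cycle reaches a different one, the shortest fork is short. -/
theorem ReturnUnique.exists_reach_of_fork (hu : ReturnUnique E) {G : ℕ}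
    (hG : Fintype.card V ≤ G) (hfork : Fork E G) (hmin : ∀ j < G, ¬ Fork E j)
    (harith : ∀ p q, 0 < p → 0 < q → p + q + 1 ≤ Fintype.card V →
      Nat.lcm p q + Fintype.card V ≤ G + p + q) :
    ∃ a b, Recurrent E a ∧ Recurrent E b ∧ Reach E a b ∧ ¬ Reach E b a := by
  classical
  by_contra hno
  have hsep : ∀ a b, Recurrent E a → Recurrent E b → Reach E a b → Reach E b a := by
    intro a b ha hb hab
    by_contra hba
    exact hno ⟨a, b, ha, hb, hab, hba⟩
  obtain ⟨x, y, z, w, hyz, hxy, hxz, hyw, hzw⟩ := hfork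
  have hcycle : ∀ u, Walk E G u w → ∃ c, Recurrent E c ∧ ∃ i j, Walk E i u c ∧ Walk E j c w ∧
      i + j + minimalPeriod (nextOnCycle E) c = G := by
    intro u hw
    obtain ⟨f, hf0, hfG, hfs⟩ := hw.exists_steps
    obtain ⟨s, t, hst, ht, heq⟩ := exists_repeat (f := f) (k := G) Finset.univ
      (by simpa using hG) (by simp)
    obtain ⟨hr, i, j, hi, hj, hsum⟩ := hu.shorten hfs hst ht heq
    exact ⟨f s, hr, i, j, hf0 ▸ hi, hfG ▸ hj, hsum⟩
  obtain ⟨c, hc, i, j, hi, hj, hsum⟩ := hcycle y hyw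
  obtain ⟨c', hc', i', j', hi', hj', hsum'⟩ := hcycle z hzw
  have hp := hu.minimalPeriod_pos hc
  have hq := hu.minimalPeriod_pos hc'
  by_cases hcc' : Reach E c c'
  · have hper := hu.minimalPeriod_eq hc hcc' (hsep _ _ hc hc' hcc')
    have h1 := hi.append hj
    have h2 := hi'.append hj'
    rw [show i' + j' = i + j by omega] at h2
    exact hmin (i + j) (by omega) ⟨x, y, z, w, hyz, hxy, hxz, h1, h2⟩
  · have hc'c : ¬ Reach E c' c := fun h => hcc' (hsep _ _ hc' hc h)
    have hxc : x ∉ component E c := by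
      rw [mem_component]
      rintro ⟨h1, -⟩
      exact hcc' (h1.trans ((Walk.single hxz).reach.trans hi'.reach))
    have hxc' : x ∉ component E c' := by
      rw [mem_component]
      rintro ⟨h1, -⟩
      exact hc'c (h1.trans ((Walk.single hxy).reach.trans hi.reach))
    have hd : Disjoint (component E c) (component E c') := by
      rw [Finset.disjoint_left]
      intro v hv hv'
      rw [mem_component] at hv hv'
      exact hcc' (hv.1.trans hv'.2)
    have hcard := Finset.card_le_univ (insert x (component E c ∪ component E c'))
    rw [Finset.card_insert_of_notMem (by simp [hxc, hxc']), Finset.card_union_of_disjoint hd]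
      at hcard
    have h1 := hc.minimalPeriod_le_card
    have h2 := hc'.minimalPeriod_le_card
    have har := harith _ _ hp hq (by omega)
    have hM := Nat.lcm_pos hp hq
    obtain ⟨m, hm⟩ := Nat.dvd_lcm_left (minimalPeriod (nextOnCycle E) c)
      (minimalPeriod (nextOnCycle E) c')
    obtain ⟨m', hm'⟩ := Nat.dvd_lcm_right (minimalPeriod (nextOnCycle E) c)
      (minimalPeriod (nextOnCycle E) c')
    rw [mul_comm] at hm hm'
    obtain ⟨k, hk, hkG⟩ := hu.shorten_through (y := y) (w := w) hsep hc hc' hcc' m G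
      ⟨i + minimalPeriod (nextOnCycle E) c, j, c, hi.append (hc.walk_of_dvd dvd_rfl), hj,
        Reach.refl c, Reach.refl c, by omega⟩ (by omega)
    obtain ⟨k', hk', hkG'⟩ := hu.shorten_through (y := z) (w := w) hsep hc' hc hc'c m' G
      ⟨i' + minimalPeriod (nextOnCycle E) c', j', c', hi'.append (hc'.walk_of_dvd dvd_rfl), hj',
        Reach.refl c', Reach.refl c', by omega⟩ (by omega)
    rw [show k' = k by omega] at hk'
    exact hmin k (by omega) ⟨x, y, z, w, hyz, hxy, hxz, hk, hk'⟩

end Finite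

/-- Two cycles of coprime lengths `p`, `q` joined by two different edges have a fork shorter
than `p * q`. -/
theorem exists_fork_of_two_edges {a b : V} (ha : Recurrent E a) (hb : Recurrent E b)
    (hab : E a b) (hba : ¬ Reach E b a) {p q d e : ℕ}
    (hpa : minimalPeriod (nextOnCycle E) a = p) (hqb : minimalPeriod (nextOnCycle E) b = q)
    (hpq : Nat.Coprime p q) (hd : d < p) (he : e < q) (hde : 0 < d + e)
    (hedge : E ((nextOnCycle E)^[d] a) ((nextOnCycle E)^[q - e] b)) :
    ∃ j < p * q, Fork E j := by
  obtain ⟨i, hi0, hiq, hi⟩ : ∃ i, 0 < i ∧ i ≤ q ∧ i * p ≡ d + e [MOD q] := by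
    have hq : 0 < q := by omega
    obtain ⟨r, hrq, hr⟩ := Nat.exists_mul_mod_eq_of_coprime (d + e) hpq hq.ne'
    rw [mul_comm] at hr
    rcases Nat.eq_zero_or_pos r with rfl | hr0
    · refine ⟨q, hq, le_rfl, ?_⟩
      simpa [Nat.ModEq] using hr
    · exact ⟨r, hr0, hrq.le, hr⟩
  have hlt : d < i * p := lt_of_lt_of_le hd (Nat.le_mul_of_pos_left p hi0)
  have hup : i * p - d < p * q := by
    rcases Nat.lt_or_ge i q with h | h
    · have := Nat.mul_lt_mul_of_pos_right h (show 0 < p by omega)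
      rw [mul_comm q] at this
      omega
    · obtain rfl : i = q := le_antisymm hiq h
      have hdvd : i ∣ d + e := by
        have h0 : i * p ≡ 0 [MOD i] := (Nat.modEq_zero_iff_dvd).mpr (dvd_mul_right i p)
        exact (Nat.modEq_zero_iff_dvd).mp (hi.symm.trans h0)
      have hd0 : 0 < d := by
        by_contra hd0
        have := Nat.le_of_dvd hde hdvd
        omega
      rw [mul_comm i] at *
      omega
  refine ⟨i * p - d, hup, (nextOnCycle E)^[d] a, (nextOnCycle E)^[q - e] b,
    (nextOnCycle E)^[d + 1] a, b, ?_, hedge, ?_, ?_, ?_⟩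
  · intro heq
    have hreach := (hb.walk_iterate (q - e)).reach
    rw [heq] at hreach
    exact hba (hreach.trans (ha.iterate_reach _))
  · rw [iterate_succ_apply']
    exact (ha.iterate d).edge_next
  · have := (hb.iterate (q - e)).walk_iterate (i * p - d)
    rw [← iterate_add_apply] at this
    have hper : IsPeriodicPt (nextOnCycle E) (i * p - d + (q - e)) b := by
      rw [isPeriodicPt_iff_minimalPeriod_dvd, hqb]
      rw [Nat.modEq_iff_dvd] at hi
      zify [hlt.le, he.le]
      push_cast at hi
      have h1 : ((i : ℤ) * p - d + (q - e)) = q - (d + e - i * p) := by ring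
      rw [h1]
      exact dvd_sub dvd_rfl hi
    rwa [hper.eq] at this
  · obtain ⟨k, hk⟩ : ∃ k, i * p - d = k + 1 := ⟨i * p - d - 1, by omega⟩
    rw [hk]
    refine Walk.append (y := a) ?_ (Walk.single hab)
    have := (ha.iterate (d + 1)).walk_iterate k
    rw [← iterate_add_apply, show k + (d + 1) = i * p by omega] at this
    have hper : IsPeriodicPt (nextOnCycle E) (i * p) a := by
      rw [isPeriodicPt_iff_minimalPeriod_dvd, hpa]
      exact dvd_mul_left p i
    rwa [hper.eq] at this

theorem ReturnUnique.edge_iterate_iff (hu : ReturnUnique E) {a : V} (ha : Recurrent E a) {p i j : ℕ}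
    (hp : minimalPeriod (nextOnCycle E) a = p) (hj : j < p) :
    E ((nextOnCycle E)^[i] a) ((nextOnCycle E)^[j] a) ↔ j = (i + 1) % p := by
  subst hp
  have hmod := iterate_mod_minimalPeriod_eq (f := nextOnCycle E) (x := a) (n := i + 1)
  constructor
  · intro h
    have hr := (ha.iterate_reach j).trans (ha.walk_iterate i).reach
    have hnext := hu.next_eq h hr
    rw [← iterate_succ_apply' (nextOnCycle E), ← hmod] at hnext
    exact (iterate_injOn_Iio_minimalPeriod (Nat.mod_lt _ (by omega)) hj hnext).symm
  · rintro rfl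
    rw [hmod, iterate_succ_apply']
    exact (ha.iterate i).edge_next

end Digraph

section StableIndex

variable {α : Type*} [Fintype α] [DecidableEq α] {A : Matrix α α ℕ}

theorem pow_pos_iff_walk (A : Matrix α α ℕ) (k : ℕ) (x y : α) :
    0 < (A ^ k) x y ↔ Walk (fun i j => A i j ≠ 0) k x y := by
  induction k generalizing x with
  | zero =>
    by_cases h : x = y <;> simp [Walk, h]
  | succ k ih =>
    rw [pow_succ', Matrix.mul_apply, Finset.sum_pos_iff]
    simp only [Finset.mem_univ, true_and, Walk, ← ih, Nat.pos_iff_ne_zero, mul_ne_zero_iff]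

theorem Fork.not_isZO_pow {j : ℕ} (h : Fork (fun i j => A i j ≠ 0) j) : ¬ IsZO (A ^ (j + 1)) := by
  obtain ⟨x, y, z, w, hyz, hxy, hxz, hyw, hzw⟩ := h
  intro hZO
  have hle := hZO x w
  rw [pow_succ', Matrix.mul_apply] at hle
  have hpair := Finset.sum_le_sum_of_subset (f := fun i => A x i * (A ^ j) i w)
    (Finset.subset_univ {y, z})
  rw [Finset.sum_pair hyz] at hpair
  have h1 := Nat.mul_pos (Nat.pos_of_ne_zero hxy) ((pow_pos_iff_walk A j y w).mpr hyw)
  have h2 := Nat.mul_pos (Nat.pos_of_ne_zero hxz) ((pow_pos_iff_walk A j z w).mpr hzw)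
  omega

theorem exists_fork_of_not_isZO_pow (hA : IsZO A) {k : ℕ} (h : ¬ IsZO (A ^ k)) :
    ∃ j < k, Fork (fun i j => A i j ≠ 0) j := by
  induction k with
  | zero =>
    refine absurd (fun i j => ?_) h
    by_cases hij : i = j <;> simp [hij]
  | succ k ih =>
    by_cases hk : IsZO (A ^ k)
    · simp only [IsZO, not_forall, not_le] at h
      obtain ⟨x, w, hxw⟩ := h
      rw [pow_succ', Matrix.mul_apply] at hxw
      have hterm : ∀ i ∈ Finset.univ, A x i * (A ^ k) i w ≤ 1 := fun i _ =>
        (Nat.mul_le_mul (hA x i) (hk i w)).trans_eq (one_mul 1)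
      have hcard : 1 < (Finset.univ.filter fun i => A x i * (A ^ k) i w ≠ 0).card := by
        refine hxw.trans_le ?_
        rw [← Finset.sum_filter_ne_zero]
        simpa using Finset.sum_le_card_nsmul _ _ 1
          (fun i hi => hterm i (Finset.mem_univ i))
      obtain ⟨y, hy, z, hz, hyz⟩ := Finset.one_lt_card.mp hcard
      simp only [Finset.mem_filter, Finset.mem_univ, true_and, mul_ne_zero_iff,
        ← Nat.pos_iff_ne_zero (n := (A ^ k) _ _), pow_pos_iff_walk] at hy hz
      exact ⟨k, by omega, x, y, z, w, hyz, hy.1, hz.1, hy.2, hz.2⟩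
    · obtain ⟨j, hj, hf⟩ := ih hk
      exact ⟨j, by omega, hf⟩

theorem not_fork_zero {V : Type*} {E : V → V → Prop} : ¬ Fork E 0 := by
  rintro ⟨x, y, z, w, hyz, -, -, rfl, rfl⟩
  exact hyz rfl

theorem theta_eq_iff_fork (hA : IsZO A) (G : ℕ) (hG : 1 ≤ G) :
    theta A = G ↔ Fork (fun i j => A i j ≠ 0) G ∧ ∀ j < G, ¬ Fork (fun i j => A i j ≠ 0) j := by
  have hmem : ∀ j, Fork (fun i j => A i j ≠ 0) j →
      j ∈ {k : ℕ | 1 ≤ k ∧ ¬ IsZO (A ^ (k + 1))} := fun j hj =>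
    ⟨Nat.one_le_iff_ne_zero.mpr fun h => not_fork_zero (h ▸ hj), hj.not_isZO_pow⟩
  constructor
  · intro h
    have hlow : ∀ j < G, ¬ Fork (fun i j => A i j ≠ 0) j := by
      intro j hj hf
      have : theta A ≤ j := sInf_le ⟨j, hmem j hf, rfl⟩
      rw [h] at this
      exact absurd (ENat.natCast_le_natCast.mp this) (by omega)
    refine ⟨?_, hlow⟩
    have hne : ((fun k : ℕ => (k : ℕ∞)) '' {k : ℕ | 1 ≤ k ∧ ¬ IsZO (A ^ (k + 1))}).Nonempty := by
      by_contra hne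
      rw [Set.not_nonempty_iff_eq_empty] at hne
      rw [theta, hne, sInf_empty] at h
      exact ENat.top_ne_natCast G h
    obtain ⟨k, hk, hkG⟩ := csInf_mem hne
    obtain rfl : k = G := ENat.natCast_inj.mp (hkG.trans h)
    obtain ⟨j, hj, hf⟩ := exists_fork_of_not_isZO_pow hA hk.2
    rcases Nat.lt_succ_iff_lt_or_eq.mp hj with hlt | rfl
    · exact absurd hf (hlow j hlt)
    · exact hf
  · rintro ⟨hf, hlow⟩
    refine le_antisymm (sInf_le ⟨G, hmem G hf, rfl⟩) (le_sInf ?_)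
    rintro _ ⟨k, hk, rfl⟩
    obtain ⟨j, hj, hf'⟩ := exists_fork_of_not_isZO_pow hA hk.2
    by_contra hlt
    have : k < G := by
      rw [not_le] at hlt
      exact ENat.natCast_lt_natCast.mp hlt
    exact hlow j (by omega) hf'

theorem theta_reindex {β : Type*} [Fintype β] [DecidableEq β] (e : α ≃ β) (A : Matrix α α ℕ) :
    theta (Matrix.reindex e e A) = theta A := by
  have hpow (k : ℕ) : Matrix.reindex e e A ^ k = Matrix.reindex e e (A ^ k) :=
    (map_pow (Matrix.reindexAlgEquiv ℕ ℕ e) A k).symm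
  have hZO (B : Matrix α α ℕ) : IsZO (Matrix.reindex e e B) ↔ IsZO B :=
    ⟨fun h i j => by simpa using h (e i) (e j), fun h i j => h _ _⟩
  simp only [theta, hpow, hZO]

end StableIndex

section Arithmetic

theorem four_mul_g (n : ℕ) (hn : 7 ≤ n) :
    (n % 2 = 1 ∧ 4 * g n + 1 = n ^ 2) ∨ (n % 4 = 0 ∧ 4 * g n + 4 = n ^ 2) ∨
      (n % 4 = 2 ∧ 4 * g n + 16 = n ^ 2) := by
  have hsq : 49 ≤ n ^ 2 := by nlinarith
  rcases (by omega : n % 2 = 1 ∨ n % 4 = 0 ∨ n % 4 = 2) with h | h | h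
  · obtain ⟨m, rfl⟩ : ∃ m, n = 2 * m + 1 := ⟨n / 2, by omega⟩
    have h2 : (2 * m + 1) ^ 2 = 4 * (m * m + m) + 1 := by ring
    refine .inl ⟨h, ?_⟩
    rw [g, if_pos h]
    omega
  · obtain ⟨m, rfl⟩ : ∃ m, n = 4 * m := ⟨n / 4, by omega⟩
    have h2 : (4 * m) ^ 2 = 4 * (4 * (m * m)) := by ring
    refine .inr (.inl ⟨h, ?_⟩)
    rw [g, if_neg (by omega), if_pos h]
    omega
  · obtain ⟨m, rfl⟩ : ∃ m, n = 2 * m := ⟨n / 2, by omega⟩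
    have h2 : (2 * m) ^ 2 = 4 * (m * m) := by ring
    refine .inr (.inr ⟨h, ?_⟩)
    rw [g, if_neg (by omega), if_neg (by omega)]
    omega

theorem lt_g {n : ℕ} (hn : 7 ≤ n) : n < g n := by
  rcases four_mul_g n hn with ⟨-, h⟩ | ⟨h', h⟩ | ⟨h', h⟩
  · nlinarith
  · nlinarith [(by omega : 8 ≤ n)]
  · nlinarith [(by omega : 10 ≤ n)]

theorem lcm_add_le_g {n : ℕ} (hn : 7 ≤ n) (hn10 : n ≠ 10) {p q : ℕ} (hp : 0 < p) (hq : 0 < q)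
    (h : p + q + 1 ≤ n) : Nat.lcm p q + n ≤ g n + p + q := by
  have hl : Nat.lcm p q ≤ p * q := Nat.le_of_dvd (Nat.mul_pos hp hq) (Nat.lcm_dvd_mul p q)
  have hsq : 4 * (p * q) ≤ (p + q) ^ 2 := by
    rcases le_total p q with h | h <;> obtain ⟨d, rfl⟩ := Nat.exists_eq_add_of_le h <;> nlinarith
  obtain ⟨k, hk⟩ : ∃ k, p + q = k + 2 := ⟨p + q - 2, by omega⟩
  obtain ⟨r, hr⟩ : ∃ r, n = k + 3 + r := ⟨n - (k + 3), by omega⟩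
  rw [hk] at hsq
  have key : 4 * (p * q) + 4 * n + 2 * n ≤ n ^ 2 + 5 + 4 * (k + 2) := by
    subst hr
    nlinarith [Nat.zero_le (k * r), sq_nonneg r]
  rcases four_mul_g n hn with ⟨-, h⟩ | ⟨h', h⟩ | ⟨h', h⟩ <;> omega

theorem StarCond.exists_sub {n p q : ℕ} (h : StarCond n p q) (hn : 7 ≤ n) :
    ∃ a d, (p = a ∧ q = a + d ∨ p = a + d ∧ q = a) ∧ 2 * a + d = n ∧
      (d = 1 ∨ d = 2 ∧ a % 2 = 1 ∨ d = 4 ∧ a % 2 = 1) ∧ 4 * g n + d ^ 2 = n ^ 2 := by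
  obtain ⟨hsum, ⟨h, hs⟩ | ⟨h, hs⟩ | ⟨h, hs⟩⟩ := h <;>
    rw [← Finset.coe_inj, Finset.coe_pair, Finset.coe_pair, Set.pair_eq_pair_iff] at hs
  · have hg : 4 * g n + 1 = n ^ 2 := by have := four_mul_g n hn; omega
    exact ⟨(n - 1) / 2, 1, by omega, by omega, by omega, by omega⟩
  · have hg : 4 * g n + 4 = n ^ 2 := by have := four_mul_g n hn; omega
    exact ⟨(n - 2) / 2, 2, by omega, by omega, by omega, by omega⟩
  · have hg : 4 * g n + 16 = n ^ 2 := by have := four_mul_g n hn; omega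
    exact ⟨(n - 4) / 2, 4, by omega, by omega, by omega, by omega⟩

theorem StarCond.mul_eq {n p q : ℕ} (h : StarCond n p q) (hn : 7 ≤ n) : p * q = g n := by
  obtain ⟨a, d, hpq, hsum, -, hg⟩ := h.exists_sub hn
  subst hsum
  rcases hpq with ⟨rfl, rfl⟩ | ⟨rfl, rfl⟩ <;> nlinarith

theorem StarCond.coprime {n p q : ℕ} (h : StarCond n p q) (hn : 7 ≤ n) : Nat.Coprime p q := by
  obtain ⟨a, d, hpq, -, hd, -⟩ := h.exists_sub hn
  have key : Nat.Coprime a d := by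
    rcases hd with rfl | ⟨rfl, ha⟩ | ⟨rfl, ha⟩
    · simp
    · exact (Nat.odd_iff.mpr ha).coprime_two_right
    · exact Nat.Coprime.pow_right 2 (Nat.odd_iff.mpr ha).coprime_two_right
  rcases hpq with ⟨rfl, rfl⟩ | ⟨rfl, rfl⟩
  · simpa using key
  · simpa using key.symm

/-- The optimization behind the extremal value `g n`. -/
theorem starCond_of_g_le {n : ℕ} (hn : 7 ≤ n) (hn10 : n ≠ 10) {p q l : ℕ} (hp : 0 < p) (hq : 0 < q)
    (hsum : p + q + l ≤ n) (hg : g n ≤ Nat.lcm p q + l) : l = 0 ∧ StarCond n p q := by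
  wlog hle : p ≤ q generalizing p q
  · obtain ⟨h1, h2, h3⟩ := this hq hp (by omega) (by rwa [Nat.lcm_comm]) (by omega)
    exact ⟨h1, by omega, by simpa only [Finset.pair_comm p q] using h3⟩
  obtain ⟨d, rfl⟩ := Nat.exists_eq_add_of_le hle
  have hlcm : Nat.lcm p (p + d) ≤ p * (p + d) :=
    Nat.le_of_dvd (Nat.mul_pos hp hq) (Nat.lcm_dvd_mul _ _)
  have hlt := lt_g hn
  have hcases := four_mul_g n hn
  have hbound : n ^ 2 ≤ 4 * g n + 16 ∧ (n < 14 → n ^ 2 ≤ 4 * g n + 4) := by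
    refine ⟨by omega, fun h => ?_⟩
    rcases hcases with h | h | h <;> omega
  obtain ⟨r, hr⟩ : ∃ r, n = 2 * p + d + r := ⟨n - (2 * p + d), by omega⟩
  have hd2 : 4 * (p * (p + d)) + d ^ 2 = (2 * p + d) ^ 2 := by ring
  have hr0 : r = 0 := by
    by_contra hr0
    have h1 : n ^ 2 = (2 * p + d) ^ 2 + r * (n + (2 * p + d)) := by rw [hr]; ring
    have h2 : r * (n + 2) ≤ r * (n + (2 * p + d)) := Nat.mul_le_mul_left r (by omega)
    have h3 : r * (n + (2 * p + d)) ≤ 4 * r + 16 := by omega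
    rcases lt_or_ge n 14 with h14 | h14
    · have := hbound.2 h14
      have h4 : r * 9 ≤ r * (n + 2) := Nat.mul_le_mul_left r (by omega)
      omega
    · have h4 : r * 16 ≤ r * (n + 2) := Nat.mul_le_mul_left r (by omega)
      obtain rfl : r = 1 := by omega
      omega
  obtain rfl : l = 0 := by omega
  refine ⟨rfl, by omega, ?_⟩
  have hne : d ≠ 0 := by
    rintro rfl
    simp only [add_zero, Nat.lcm_self] at hg
    omega
  have hn2 : n ^ 2 = 4 * (p * (p + d)) + d ^ 2 := by rw [hr, hr0, hd2, add_zero]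
  have hroot {m : ℕ} (h : d ^ 2 ≤ m ^ 2) : d ≤ m := (Nat.pow_le_pow_iff_left two_ne_zero).mp h
  rcases hcases with ⟨h, hG⟩ | ⟨h, hG⟩ | ⟨h, hG⟩
  · have : d ≤ 1 := hroot (by omega)
    obtain rfl : d = 1 := by omega
    refine .inl ⟨h, ?_⟩
    rw [Finset.pair_comm]
    congr 1 <;> [skip; congr 1] <;> omega
  · have : d ≤ 2 := hroot (by omega)
    obtain rfl : d = 2 := by omega
    refine .inr (.inl ⟨h, ?_⟩)
    rw [Finset.pair_comm]
    congr 1 <;> [skip; congr 1] <;> omega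
  · have : d ≤ 4 := hroot (by omega)
    obtain rfl | rfl : d = 2 ∨ d = 4 := by omega
    · have hdvd : Nat.lcm p (p + 2) ∣ p * (p + 2) / 2 := by
        obtain ⟨s, rfl⟩ : ∃ s, p = 2 * s := ⟨p / 2, by omega⟩
        rw [show 2 * s * (2 * s + 2) / 2 = 2 * s * (s + 1) by
          rw [show 2 * s * (2 * s + 2) = 2 * (2 * s * (s + 1)) by ring]; omega]
        exact Nat.lcm_dvd (dvd_mul_right _ _) ⟨s, by ring⟩
      have hbig : 6 * 8 ≤ p * (p + 2) := Nat.mul_le_mul (by omega) (by omega)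
      have := Nat.le_of_dvd (by omega) hdvd
      omega
    · refine .inr (.inr ⟨h, ?_⟩)
      rw [Finset.pair_comm]
      congr 1 <;> [skip; congr 1] <;> omega

end Arithmetic

section Blocks

theorem exists_blocks_of_fork {n : ℕ} (hn : 7 ≤ n) (hn10 : n ≠ 10)
    {A : Matrix (Fin n) (Fin n) ℕ} (hA : IsZO A) (hfork : Fork (fun i j => A i j ≠ 0) (g n))
    (hmin : ∀ j < g n, ¬ Fork (fun i j => A i j ≠ 0) j) :
    ∃ (p q : ℕ) (X : Matrix (Fin p) (Fin q) ℕ),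
      StarCond n p q ∧ IsZO X ∧ (∃! ij : Fin p × Fin q, X ij.1 ij.2 ≠ 0) ∧
      ∃ e : (Fin p ⊕ Fin q) ≃ Fin n,
        A = Matrix.reindex e e (Matrix.fromBlocks (Cmat p) X 0 (Cmat q)) := by
  have hcard : Fintype.card (Fin n) = n := Fintype.card_fin n
  have hlt := lt_g hn
  set E : Fin n → Fin n → Prop := fun i j => A i j ≠ 0 with hE
  have hA1 {i j : Fin n} (h : E i j) : A i j = 1 :=
    le_antisymm (hA i j) (Nat.one_le_iff_ne_zero.mpr h)
  have hu : ReturnUnique E := returnUnique_of_not_fork fun j hj => hmin j (by omega)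
  obtain ⟨a, b, l, ha, hb, hab, hba, hle, hf⟩ := hu.exists_fork_of_reach
    (hu.exists_reach_of_fork (by omega) hfork hmin (by
      rw [hcard]; exact fun p q hp hq h => lcm_add_le_g hn hn10 hp hq h))
  have hp := hu.minimalPeriod_pos ha
  have hq := hu.minimalPeriod_pos hb
  obtain ⟨rfl, hstar⟩ := starCond_of_g_le hn hn10 hp hq (by omega)
    (not_lt.mp fun h => hmin _ h hf)
  have hEab : E a b := by
    obtain ⟨v, hv, hvb⟩ := hab
    exact hvb ▸ hv
  have hmul := hstar.mul_eq hn
  have hcop := hstar.coprime hn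
  have hsum := hstar.1
  obtain ⟨p, hpa⟩ : ∃ p, minimalPeriod (nextOnCycle E) a = p := ⟨_, rfl⟩
  obtain ⟨q, hqb⟩ : ∃ q, minimalPeriod (nextOnCycle E) b = q := ⟨_, rfl⟩
  have hinja : Set.InjOn (fun i => (nextOnCycle E)^[i] a) (Set.Iio p) :=
    hpa ▸ iterate_injOn_Iio_minimalPeriod
  have hinjb : Set.InjOn (fun i => (nextOnCycle E)^[i] b) (Set.Iio q) :=
    hqb ▸ iterate_injOn_Iio_minimalPeriod
  rw [hpa, hqb] at hstar hmul hcop hsum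
  rw [hpa] at hp
  rw [hqb] at hq
  have hback (i j : ℕ) : ¬ Reach E ((nextOnCycle E)^[j] b) ((nextOnCycle E)^[i] a) := fun h =>
    hba ((hb.walk_iterate j).reach.trans (h.trans (ha.iterate_reach i)))
  have hinj : Injective (Sum.elim (fun i : Fin p => (nextOnCycle E)^[(i : ℕ)] a)
      (fun j : Fin q => (nextOnCycle E)^[(j : ℕ)] b)) := by
    refine Injective.sumElim ?_ ?_ ?_
    · exact fun i j hij => Fin.ext (hinja i.2 j.2 hij)
    · exact fun i j hij => Fin.ext (hinjb i.2 j.2 hij)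
    · intro i j hij
      refine hback i j ?_
      rw [← hij]
      exact Reach.refl _
  let e : (Fin p ⊕ Fin q) ≃ Fin n := Equiv.ofBijective _
    ((Fintype.bijective_iff_injective_and_card _).mpr ⟨hinj, by simp [hsum]⟩)
  have hel (i : Fin p) : e (.inl i) = (nextOnCycle E)^[(i : ℕ)] a := rfl
  have her (j : Fin q) : e (.inr j) = (nextOnCycle E)^[(j : ℕ)] b := rfl
  refine ⟨p, q, fun i j => A (e (.inl i)) (e (.inr j)), hstar, fun i j => hA _ _,
    ⟨(⟨0, hp⟩, ⟨0, hq⟩), hEab, ?_⟩, e, ?_⟩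
  · rintro ⟨i, j⟩ hij
    by_contra hne
    have hne' : 0 < (i : ℕ) ∨ 0 < (j : ℕ) := by
      by_contra h
      exact hne (Prod.ext (Fin.ext (by simp; omega)) (Fin.ext (by simp; omega)))
    have hEij : E ((nextOnCycle E)^[(i : ℕ)] a) ((nextOnCycle E)^[(j : ℕ)] b) := hij
    have hi := i.2
    have hj := j.2
    obtain ⟨k, hk, hkf⟩ : ∃ k < p * q, Fork E k := by
      rcases Nat.eq_zero_or_pos (j : ℕ) with hj0 | hj0
      · refine exists_fork_of_two_edges ha hb hEab hba hpa hqb hcop hi hq (by omega) ?_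
        rw [Nat.sub_zero, ← hqb, iterate_minimalPeriod]
        simpa [hj0] using hEij
      · refine exists_fork_of_two_edges ha hb hEab hba hpa hqb hcop hi
          (show q - j < q by omega) (by omega) ?_
        rwa [show q - (q - (j : ℕ)) = j by omega]
    exact hmin k (by omega) hkf
  · suffices h : ∀ u v, A (e u) (e v) = Matrix.fromBlocks (Cmat p)
        (fun i j => A (e (.inl i)) (e (.inr j))) 0 (Cmat q) u v by
      ext u v
      simpa using h (e.symm u) (e.symm v)
    have hcyc {c : Fin n} (hc : Recurrent E c) {r : ℕ} (hr : minimalPeriod (nextOnCycle E) c = r)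
        (i j : Fin r) :
        A ((nextOnCycle E)^[(i : ℕ)] c) ((nextOnCycle E)^[(j : ℕ)] c) = Cmat r i j := by
      have hiff := hu.edge_iterate_iff hc (i := i) hr j.2
      rw [Cmat, Matrix.of_apply]
      split_ifs with h
      · exact hA1 (hiff.mpr h)
      · exact not_not.mp fun h' => h (hiff.mp h')
    rintro (i | i) (j | j)
    · exact hcyc ha hpa i j
    · rfl
    · exact not_not.mp fun h => hback j i (Walk.single (E := E) h).reach
    · exact hcyc hb hqb i j

variable {p q : ℕ} {X : Matrix (Fin p) (Fin q) ℕ}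

/-- The digraph of two cycles with edges from the first to the second. -/
abbrev blockEdge (X : Matrix (Fin p) (Fin q) ℕ) (u v : Fin p ⊕ Fin q) : Prop :=
  Matrix.fromBlocks (Cmat p) X 0 (Cmat q) u v ≠ 0

theorem blockEdge_inl_inl {i j : Fin p} :
    blockEdge X (.inl i) (.inl j) ↔ (j : ℕ) = (i + 1) % p := by
  simp [blockEdge, Cmat]

theorem blockEdge_inr_inr {i j : Fin q} :
    blockEdge X (.inr i) (.inr j) ↔ (j : ℕ) = (i + 1) % q := by
  simp [blockEdge, Cmat]

theorem walk_inl_inl (k : ℕ) {i j : Fin p} (h : (j : ℕ) = (i + k) % p) :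
    Walk (blockEdge X) k (.inl i) (.inl j) := by
  induction k generalizing i with
  | zero =>
    rw [add_zero, Nat.mod_eq_of_lt i.2] at h
    rw [Fin.ext h]
    rfl
  | succ k ih =>
    refine ⟨.inl ⟨(i + 1) % p, Nat.mod_lt _ (by omega)⟩, blockEdge_inl_inl.mpr rfl, ih ?_⟩
    rw [h, Nat.mod_add_mod, add_right_comm, add_assoc]

theorem walk_inr_inr (k : ℕ) {i j : Fin q} (h : (j : ℕ) = (i + k) % q) :
    Walk (blockEdge X) k (.inr i) (.inr j) := by
  induction k generalizing i with
  | zero =>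
    rw [add_zero, Nat.mod_eq_of_lt i.2] at h
    rw [Fin.ext h]
    rfl
  | succ k ih =>
    refine ⟨.inr ⟨(i + 1) % q, Nat.mod_lt _ (by omega)⟩, blockEdge_inr_inr.mpr rfl, ih ?_⟩
    rw [h, Nat.mod_add_mod, add_right_comm, add_assoc]

theorem walk_from_inr {k : ℕ} {i : Fin q} {w : Fin p ⊕ Fin q}
    (h : Walk (blockEdge X) k (.inr i) w) : ∃ j : Fin q, w = .inr j ∧ j ≡ i + k [MOD q] := by
  induction k generalizing i with
  | zero => exact ⟨i, h.symm, rfl⟩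
  | succ k ih =>
    obtain ⟨u | u, hu, hw⟩ := h
    · simp [blockEdge] at hu
    · obtain ⟨j, rfl, hj⟩ := ih hw
      refine ⟨j, rfl, hj.trans ?_⟩
      rw [blockEdge_inr_inr.mp hu, add_comm k, ← add_assoc]
      exact (Nat.mod_modEq _ _).add_right k

/-- A walk from the first cycle to the second crosses the only edge between them. -/
theorem walk_crossing {x : Fin p} {y : Fin q} (hX : ∀ i j, X i j ≠ 0 → i = x ∧ j = y) {k : ℕ}
    {i : Fin p} {j : Fin q} (h : Walk (blockEdge X) k (.inl i) (.inr j)) :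
    ∃ s t, s + 1 + t = k ∧ x ≡ i + s [MOD p] ∧ j ≡ y + t [MOD q] := by
  induction k generalizing i with
  | zero => cases h
  | succ k ih =>
    obtain ⟨u | u, hu, hw⟩ := h
    · obtain ⟨s, t, hst, hs, ht⟩ := ih hw
      refine ⟨s + 1, t, by omega, hs.trans ?_, ht⟩
      rw [blockEdge_inl_inl.mp hu, add_comm s, ← add_assoc]
      exact (Nat.mod_modEq _ _).add_right s
    · obtain ⟨rfl, rfl⟩ := hX i u hu
      obtain ⟨j', hj, hmod⟩ := walk_from_inr hw
      cases hj
      exact ⟨0, k, by omega, rfl, hmod⟩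

theorem fork_blockEdge {x : Fin p} {y : Fin q} (hxy : X x y ≠ 0) :
    Fork (blockEdge X) (p * q) := by
  have hp : 0 < p := x.pos
  have hq : 0 < q := y.pos
  have hpq : 0 < p * q := Nat.mul_pos hp hq
  refine ⟨.inl x, .inl ⟨(x + 1) % p, Nat.mod_lt _ hp⟩, .inr y, .inr y, by simp,
    blockEdge_inl_inl.mpr rfl, hxy, ?_, walk_inr_inr _ ?_⟩
  · obtain ⟨k, hk⟩ : ∃ k, p * q = k + 1 := ⟨p * q - 1, by omega⟩
    rw [hk]
    refine (walk_inl_inl (j := x) k ?_).append (Walk.single hxy)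
    rw [Nat.mod_add_mod, add_assoc, add_comm 1, ← hk, Nat.add_mul_mod_self_left,
      Nat.mod_eq_of_lt x.2]
  · rw [Nat.add_mul_mod_self_right, Nat.mod_eq_of_lt y.2]

theorem mul_le_of_fork_blockEdge {x : Fin p} {y : Fin q} (hX : ∀ i j, X i j ≠ 0 → i = x ∧ j = y)
    (hpq : Nat.Coprime p q) {k : ℕ} (h : Fork (blockEdge X) k) : p * q ≤ k := by
  have key : ∀ (i u : Fin p) (v : Fin q) (w : Fin p ⊕ Fin q), blockEdge X (.inl i) (.inl u) →
      blockEdge X (.inl i) (.inr v) → Walk (blockEdge X) k (.inl u) w →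
      Walk (blockEdge X) k (.inr v) w → p * q ≤ k := by
    intro i u v w hu hv huw hvw
    obtain ⟨rfl, rfl⟩ := hX i v hv
    obtain ⟨j, rfl, hj⟩ := walk_from_inr hvw
    obtain ⟨s, t, rfl, hs, ht⟩ := walk_crossing hX huw
    have hps : p ∣ s + 1 := by
      rw [blockEdge_inl_inl.mp hu] at hs
      have h1 : (i : ℕ) + 0 ≡ i + (s + 1) [MOD p] := by
        refine hs.trans ?_
        rw [add_comm s, ← add_assoc]
        exact (Nat.mod_modEq _ _).add_right s
      exact (Nat.modEq_zero_iff_dvd).mp (Nat.ModEq.add_left_cancel' _ h1).symm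
    have hqs : q ∣ s + 1 := by
      have h1 : (v : ℕ) + t + (s + 1) ≡ v + t + 0 [MOD q] := by
        rw [add_zero, add_assoc, add_comm t]
        exact hj.symm.trans ht
      exact (Nat.modEq_zero_iff_dvd).mp (Nat.ModEq.add_left_cancel' _ h1)
    have := Nat.le_of_dvd (by omega) (hpq.mul_dvd_of_dvd_of_dvd hps hqs)
    omega
  obtain ⟨i | i, u | u, v | v, w, huv, hu, hv, huw, hvw⟩ := h
  · refine absurd ?_ huv
    rw [Fin.ext ((blockEdge_inl_inl.mp hu).trans (blockEdge_inl_inl.mp hv).symm)]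
  · exact key i u v w hu hv huw hvw
  · exact key i v u w hv hu hvw huw
  · exact absurd (by rw [(hX i u hu).2, (hX i v hv).2]) huv
  · simp [blockEdge] at hu
  · simp [blockEdge] at hu
  · simp [blockEdge] at hv
  · refine absurd ?_ huv
    rw [Fin.ext ((blockEdge_inr_inr.mp hu).trans (blockEdge_inr_inr.mp hv).symm)]

end Blocks

theorem stmt_1 (n : ℕ) (hn : 7 ≤ n) (hn10 : n ≠ 10)
    (A : Matrix (Fin n) (Fin n) ℕ) (hA : IsZO A) (hfin : theta A ≠ ⊤) :
    theta A = (g n : ℕ∞) ↔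
      ∃ (p q : ℕ) (X : Matrix (Fin p) (Fin q) ℕ),
        StarCond n p q ∧ IsZO X ∧ (∃! ij : Fin p × Fin q, X ij.1 ij.2 ≠ 0) ∧
        ∃ e : (Fin p ⊕ Fin q) ≃ Fin n,
          A = Matrix.reindex e e (Matrix.fromBlocks (Cmat p) X 0 (Cmat q)) := by
  have hg : 1 ≤ g n := by have := lt_g hn; omega
  constructor
  · intro h
    obtain ⟨hfork, hmin⟩ := (theta_eq_iff_fork hA _ hg).mp h
    exact exists_blocks_of_fork hn hn10 hA hfork hmin
  · rintro ⟨p, q, X, hstar, -, ⟨⟨x, y⟩, hxy, huniq⟩, e, rfl⟩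
    have hX : ∀ i j, X i j ≠ 0 → i = x ∧ j = y := fun i j hij => by
      simpa using huniq (i, j) hij
    have hZO : IsZO (Matrix.fromBlocks (Cmat p) X 0 (Cmat q)) := fun u v => by
      simpa using hA (e u) (e v)
    rw [theta_reindex, theta_eq_iff_fork hZO _ hg, ← hstar.mul_eq hn]
    exact ⟨fork_blockEdge hxy, fun j hj hf =>
      absurd (mul_le_of_fork_blockEdge hX (hstar.coprime hn) hf) (by omega)⟩
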